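/- Let λ, b ∈ X₀([0,T₀]×D_{R₀}) satisfy Re λ(0,0) > 0, |λ(t,x) − λ(0,x)| ≤ Λ·m(t) and |b(t,x)| ≤ B·m(t)/|log t| on [0,T₀]×D_{R₀} for a weight function m, with 0 < T₀ < 1/e. If v ∈ X₁((0,T₁]×D_{R₁}) is any solution of t·∂v/∂t − λ(t,x)·v − b(t,x)·∂v/∂x = 0 on (0,T₁]×D_{R₁}, then there exist a holomorphic germ ψ at x = 0 and ε, δ > 0 such that v = V(ψ) on (0,ε]×D_δ, where V(ψ) is the unique solution with t^{−λ(0,x)}·V(ψ)(t,x) → ψ(x) uniformly near x = 0 as t → 0⁺; in particular t^{−λ(0,x)}·v(t,x) converges uniformly near x = 0 to a holomorphic function as t → 0⁺. -/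

import Mathlib

open Set Filter MeasureTheory Metric Topology Complex

noncomputable section

/-- A *weight function* on `(0, T₀]`: increasing, continuous and positive on `(0,T₀]`,
with `∫₀^{T₀} m(τ)/τ dτ < ∞`. -/
def IsWeight (T₀ : ℝ) (m : ℝ → ℝ) : Prop :=
  MonotoneOn m (Set.Ioc 0 T₀) ∧ ContinuousOn m (Set.Ioc 0 T₀) ∧
    (∀ t ∈ Set.Ioc (0 : ℝ) T₀, 0 < m t) ∧
    MeasureTheory.IntegrableOn (fun τ => m τ / τ) (Set.Ioc 0 T₀)

/-- `φ(t) = ∫₀ᵗ m(τ)/τ dτ`. -/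
def wphi (m : ℝ → ℝ) (t : ℝ) : ℝ := ∫ τ in Set.Ioc (0 : ℝ) t, m τ / τ

/-- `f ∈ X₀(S × D_R)` : continuous on `S × D_R`, holomorphic in `x` for each fixed `t`. -/
def MemX0 (S : Set ℝ) (R : ℝ) (f : ℝ → ℂ → ℂ) : Prop :=
  ContinuousOn (fun p : ℝ × ℂ => f p.1 p.2) (S ×ˢ Metric.ball (0 : ℂ) R) ∧
    ∀ t ∈ S, DifferentiableOn ℂ (f t) (Metric.ball (0 : ℂ) R)

/-- `f ∈ X₁(S × D_R)` : `f ∈ X₀`, with a `t`-derivative for `t > 0` such that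
`t ∂f/∂t ∈ X₀`. -/
def MemX1 (S : Set ℝ) (R : ℝ) (f : ℝ → ℂ → ℂ) : Prop :=
  MemX0 S R f ∧
    ∃ g : ℝ → ℂ → ℂ, MemX0 S R g ∧
      ∀ t ∈ S, 0 < t → ∀ x ∈ Metric.ball (0 : ℂ) R,
        HasDerivWithinAt (fun s => f s x) (g t x / (t : ℂ)) S t

/-- `u` solves equation (E) :
`t ∂u/∂t = a + λ u + b ∂u/∂x + Σ_{j+α≥2} a_{j,α} u^j (∂u/∂x)^α` on `(0,T] × D_R`. -/
def SolvesE (T R : ℝ) (a lam b : ℝ → ℂ → ℂ) (c : ℕ → ℕ → ℝ → ℂ → ℂ)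
    (u : ℝ → ℂ → ℂ) : Prop :=
  ∀ t ∈ Set.Ioc (0 : ℝ) T, ∀ x ∈ Metric.ball (0 : ℂ) R,
    HasDerivWithinAt (fun s => u s x)
      ((a t x + lam t x * u t x + b t x * deriv (u t) x +
          ∑' p : ℕ × ℕ, c p.1 p.2 t x * u t x ^ p.1 * deriv (u t) x ^ p.2) / (t : ℂ))
      (Set.Ioc 0 T) t

/-- `u` is a germ (near the origin) solution of equation (E). -/
def GermSol (T₀ R₀ : ℝ) (a lam b : ℝ → ℂ → ℂ) (c : ℕ → ℕ → ℝ → ℂ → ℂ)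
    (u : ℝ → ℂ → ℂ) : Prop :=
  ∃ T, 0 < T ∧ T ≤ T₀ ∧ ∃ R, 0 < R ∧ R ≤ R₀ ∧ SolvesE T R a lam b c u

/-- the germ class `X₁^d`. -/
def MemX1d (d : ℝ) (u : ℝ → ℂ → ℂ) : Prop :=
  ∃ T > (0 : ℝ), ∃ R > (0 : ℝ), MemX1 (Set.Icc 0 T) R u ∧
    ∃ C > (0 : ℝ), ∀ t ∈ Set.Icc (0 : ℝ) T, ∀ x ∈ Metric.ball (0 : ℂ) R,
      max ‖u t x‖ ‖deriv (u t) x‖ ≤ C * t ^ d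

/-- the germ class `X₁⁺ = ⋃_{d>0} X₁^d`. -/
def MemX1plus (u : ℝ → ℂ → ℂ) : Prop := ∃ d > (0 : ℝ), MemX1d d u

/-- the germ class `X₁^{(μ)} = ⋂_{0<a<μ} X₁^a`. -/
def MemX1lt (μ : ℝ) (u : ℝ → ℂ → ℂ) : Prop := ∀ a : ℝ, 0 < a → a < μ → MemX1d a u

/-- two functions agree as germs on some `(0,ε] × D_δ`. -/
def GermEqPos (u v : ℝ → ℂ → ℂ) : Prop :=
  ∃ ε > (0 : ℝ), ∃ δ > (0 : ℝ), ∀ t ∈ Set.Ioc (0 : ℝ) ε, ∀ x ∈ Metric.ball (0 : ℂ) δ,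
    u t x = v t x

/-- the class `𝒳₁` (built on `X₁([0,T]×D_R)`) : the limsup-condition
`limsup_{ρ→0⁺} [ lim_{σ→0⁺} (1/ρ²) sup_{(0,σ)×D_ρ} |u| ] = 0`. -/
def MemXscrIcc (u : ℝ → ℂ → ℂ) : Prop :=
  (∃ T > (0 : ℝ), ∃ R > (0 : ℝ), MemX1 (Set.Icc 0 T) R u) ∧
    ∀ ε > (0 : ℝ), ∃ ρ₁ > (0 : ℝ), ∀ ρ, 0 < ρ → ρ < ρ₁ →
      ∃ σ > (0 : ℝ), ∀ t, 0 < t → t < σ → ∀ x ∈ Metric.ball (0 : ℂ) ρ,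
        ‖u t x‖ ≤ ε * ρ ^ 2

/-- the class `𝒳₁` (built on `X₁((0,T]×D_R)`). -/
def MemXscrIoc (u : ℝ → ℂ → ℂ) : Prop :=
  (∃ T > (0 : ℝ), ∃ R > (0 : ℝ), MemX1 (Set.Ioc 0 T) R u) ∧
    ∀ ε > (0 : ℝ), ∃ ρ₁ > (0 : ℝ), ∀ ρ, 0 < ρ → ρ < ρ₁ →
      ∃ σ > (0 : ℝ), ∀ t, 0 < t → t < σ → ∀ x ∈ Metric.ball (0 : ℂ) ρ,
        ‖u t x‖ ≤ ε * ρ ^ 2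

/-- `ψ` is holomorphic in a neighborhood of `x = 0`. -/
def HoloGerm (ψ : ℂ → ℂ) : Prop :=
  ∃ r > (0 : ℝ), DifferentiableOn ℂ ψ (Metric.ball (0 : ℂ) r)

/-- `t^{-λ(0,x)} w(t,x) → ψ(x)` as `t → 0⁺`, uniformly near `x = 0`,
where `t^{-λ(0,x)} = exp(-λ(0,x) log t)`. -/
def BndLimit (lam0 : ℂ → ℂ) (w : ℝ → ℂ → ℂ) (ψ : ℂ → ℂ) : Prop :=
  ∃ δ > (0 : ℝ), TendstoUniformlyOn
    (fun t x => Complex.exp (-(lam0 x) * (Real.log t : ℂ)) * w t x) ψ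
    (nhdsWithin 0 (Set.Ioi 0)) (Metric.ball (0 : ℂ) δ)

/-- `lim_{t→0⁺} sup_{x ∈ D_R} |t^{-d} u(t,x)| = 0`. -/
def SmalloOnBall (d R : ℝ) (u : ℝ → ℂ → ℂ) : Prop :=
  ∀ ε > (0 : ℝ), ∃ τ > (0 : ℝ), ∀ t, 0 < t → t < τ → ∀ x ∈ Metric.ball (0 : ℂ) R,
    ‖u t x‖ ≤ ε * t ^ d

/-- `f ∈ X₀(W)` for a general domain `W ⊆ ℝ × ℂ`. -/
def MemX0W (W : Set (ℝ × ℂ)) (f : ℝ → ℂ → ℂ) : Prop :=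
  ContinuousOn (fun p : ℝ × ℂ => f p.1 p.2) W ∧
    ∀ t : ℝ, DifferentiableOn ℂ (f t) {y : ℂ | (t, y) ∈ W}

/-- `f ∈ X₁(W)` for a general domain `W ⊆ ℝ × ℂ`. -/
def MemX1W (W : Set (ℝ × ℂ)) (f : ℝ → ℂ → ℂ) : Prop :=
  MemX0W W f ∧
    ∃ g : ℝ → ℂ → ℂ, MemX0W W g ∧
      ∀ t x, (t, x) ∈ W → 0 < t →
        HasDerivWithinAt (fun s => f s x) (g t x / (t : ℂ)) {s : ℝ | (s, x) ∈ W} t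

/-- `w` solves `t ∂w/∂t = λ w + b ∂w/∂x + g` on the domain `W`. -/
def SolvesLW (W : Set (ℝ × ℂ)) (lam b g w : ℝ → ℂ → ℂ) : Prop :=
  ∀ t x, (t, x) ∈ W → 0 < t →
    HasDerivWithinAt (fun s => w s x)
      ((lam t x * w t x + b t x * deriv (w t) x + g t x) / (t : ℂ))
      {s : ℝ | (s, x) ∈ W} t

/-- `v` solves the homogeneous linear equation `t ∂v/∂t = λ v + b ∂v/∂x`
on the product domain `S × D_R`. -/
def SolvesLin (S : Set ℝ) (R : ℝ) (lam b : ℝ → ℂ → ℂ) (v : ℝ → ℂ → ℂ) : Prop :=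
  ∀ t ∈ S, 0 < t → ∀ x ∈ Metric.ball (0 : ℂ) R,
    HasDerivWithinAt (fun s => v s x)
      ((lam t x * v t x + b t x * deriv (v t) x) / (t : ℂ)) S t

/-- the characteristic domain `𝒟 = ⋃_{x₀ ∈ D_{R₁}} {(t, φ(t;T,x₀)) : 0 < t ≤ T}`. -/
def Dchar (T R₁ : ℝ) (Φ : ℝ → ℝ → ℂ → ℂ) : Set (ℝ × ℂ) :=
  {p : ℝ × ℂ | p.1 ∈ Set.Ioc (0 : ℝ) T ∧ ∃ x₀ ∈ Metric.ball (0 : ℂ) R₁, p.2 = Φ p.1 T x₀}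

/-- the domain `W = {(t,x) ∈ [0,T] × D_R : φ(t)/r + |x| < R}`. -/
def Wset (m : ℝ → ℝ) (T R r : ℝ) : Set (ℝ × ℂ) :=
  {p : ℝ × ℂ | p.1 ∈ Set.Icc (0 : ℝ) T ∧ p.2 ∈ Metric.ball (0 : ℂ) R ∧
    wphi m p.1 / r + ‖p.2‖ < R}

lemma nagumo (a b R M A : ℝ) (hab : a ≤ b) (hR : 0 < R) (u : ℝ → ℂ → ℂ) (k ρ : ℝ → ℝ)
    (hA : ∀ t ∈ Icc a b, ∀ x ∈ ball (0:ℂ) R, ‖u t x‖ ≤ A)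
    (hhol : ∀ t ∈ Icc a b, DifferentiableOn ℂ (u t) (ball (0:ℂ) R))
    (hder : ∀ t ∈ Icc a b, ∀ x ∈ ball (0:ℂ) R, ∃ u' : ℂ,
      HasDerivWithinAt (fun s => u s x) u' (Icc a b) t ∧
        ‖u'‖ ≤ k t * (‖u t x‖ + ‖deriv (u t) x‖))
    (hk : ∀ t ∈ Icc a b, 0 ≤ k t)
    (hρ : ∀ t ∈ Icc a b, HasDerivWithinAt ρ (k t) (Icc a b) t)
    (hmono : MonotoneOn ρ (Icc a b)) (hρa : ρ a = 0)
    (hsmall : 2 * (4 + R) * ρ b ≤ R / 4)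
    (hM : ∀ x ∈ ball (0:ℂ) R, ‖u a x‖ ≤ M) :
    ∀ t ∈ Icc a b, ∀ x : ℂ, ‖x‖ ≤ R / 4 → ‖u t x‖ ≤ 4 * M := by
  have haI : a ∈ Icc a b := left_mem_Icc.2 hab
  have hbI : b ∈ Icc a b := right_mem_Icc.2 hab
  have hM0 : 0 ≤ M := (norm_nonneg _).trans (hM 0 (by simpa using hR))
  have hρ0 : ∀ t ∈ Icc a b, 0 ≤ ρ t := fun t ht => hρa ▸ hmono haI ht ht.1
  set K : ℝ := 2 * (4 + R) with hK
  have hKpos : 0 < K := by positivity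
  have hA0 : 0 ≤ A := (norm_nonneg _).trans (hA a haI 0 (by simpa using hR))
  set S : Set ℝ := {y | ∃ t ∈ Icc a b, ∃ x : ℂ, ‖x‖ + K * ρ t < R ∧
    y = ‖u t x‖ * (R - ‖x‖ - K * ρ t)} with hS
  have hball : ∀ t ∈ Icc a b, ∀ x : ℂ, ‖x‖ + K * ρ t < R → x ∈ ball (0:ℂ) R := by
    intro t ht x hx
    have := mul_nonneg hKpos.le (hρ0 t ht)
    simp only [mem_ball, dist_zero_right]; linarith
  have hSb : BddAbove S := by
    refine ⟨A * R, ?_⟩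
    rintro y ⟨t, ht, x, hx, rfl⟩
    have := mul_nonneg hKpos.le (hρ0 t ht)
    have h2 := norm_nonneg x
    exact mul_le_mul (hA t ht x (hball t ht x hx)) (by linarith) (by linarith) hA0
  have hSne : S.Nonempty := ⟨_, a, haI, 0, by simpa [hρa] using hR, rfl⟩
  set N := sSup S with hN
  have hle : ∀ t ∈ Icc a b, ∀ x : ℂ, ‖x‖ + K * ρ t < R →
      ‖u t x‖ * (R - ‖x‖ - K * ρ t) ≤ N := fun t ht x hx => le_csSup hSb ⟨t, ht, x, hx, rfl⟩
  have hN0 : 0 ≤ N := (by positivity : 0 ≤ ‖u a 0‖ * R).trans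
    (by simpa [hρa] using hle a haI 0 (by simpa [hρa] using hR))
  have hstep : ∀ t ∈ Icc a b, ∀ x : ℂ, ‖x‖ + K * ρ t < R →
      ‖u t x‖ * (R - ‖x‖ - K * ρ t) ≤ M * R + N / 2 := by
    intro t ht x hx
    have hsub : Icc a t ⊆ Icc a b := Icc_subset_Icc_right ht.2
    have hd : ∀ τ ∈ Icc a t, ‖x‖ + K * ρ τ < R := by
      intro τ hτ
      have := mul_le_mul_of_nonneg_left (hmono (hsub hτ) ht hτ.2) hKpos.le
      linarith
    have hxb := hball t ht x hx
    have hbound : ∀ τ ∈ Icc a t, ‖u τ x‖ + ‖deriv (u τ) x‖ ≤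
        N * (4 + R) / (R - ‖x‖ - K * ρ τ) ^ 2 := by
      intro τ hτ
      set d := R - ‖x‖ - K * ρ τ with hdd
      have hdpos : 0 < d := by have := hd τ hτ; linarith
      have hKr := mul_nonneg hKpos.le (hρ0 τ (hsub hτ))
      have hxn := norm_nonneg x
      have hdR : d ≤ R := by linarith
      have h1 : ‖u τ x‖ ≤ N / d := by
        rw [le_div_iff₀ hdpos]; exact hle τ (hsub hτ) x (hd τ hτ)
      have hsubb : closedBall x (d/2) ⊆ ball (0:ℂ) R := by
        intro y hy
        have : ‖y‖ ≤ ‖x‖ + d / 2 := by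
          have h3 := norm_le_norm_add_norm_sub' y x
          rw [mem_closedBall, dist_eq_norm] at hy; linarith
        simp only [mem_ball, dist_zero_right]; linarith
      have h2 : ‖deriv (u τ) x‖ ≤ (N / (d/2)) / (d/2) := by
        apply Complex.norm_deriv_le_of_forall_mem_sphere_norm_le (by linarith)
        · exact ((hhol τ (hsub hτ)).mono hsubb).diffContOnCl_ball (Subset.refl _)
        · intro y hy
          have hy' : ‖y‖ ≤ ‖x‖ + d / 2 := by
            have h3 := norm_le_norm_add_norm_sub' y x
            rw [mem_sphere, dist_eq_norm] at hy; linarith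
          rw [le_div_iff₀ (by linarith)]
          refine le_trans ?_ (hle τ (hsub hτ) y (by linarith))
          exact mul_le_mul_of_nonneg_left (by linarith) (norm_nonneg _)
      have h3 : N / d ≤ N * R / d ^ 2 := by
        rw [div_le_div_iff₀ hdpos (by positivity)]
        nlinarith [mul_nonneg (mul_nonneg hN0 hdpos.le) (sub_nonneg.2 hdR)]
      have h4 : (N / (d/2)) / (d/2) = 4 * N / d ^ 2 := by field_simp; norm_num
      have h5 : N * (4 + R) / d ^ 2 = N * R / d ^ 2 + 4 * N / d ^ 2 := by ring
      linarith
    choose! u' hu' hu'b using hder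
    have hxb' : x ∈ ball (0:ℂ) R := hxb
    have key := image_norm_le_of_norm_deriv_right_le_deriv_boundary' (a := a) (b := t)
      (f := fun s => u s x) (f' := fun s => u' s x)
      (B := fun s => M + N / 2 / (R - ‖x‖ - K * ρ s))
      (B' := fun s => k s * (N * (4 + R) / (R - ‖x‖ - K * ρ s) ^ 2))
      (fun s hs => ((hu' s (hsub hs) x hxb).continuousWithinAt.mono hsub))
      (fun s hs => ((hu' s (hsub ⟨hs.1, hs.2.le⟩) x hxb).mono_of_mem_nhdsWithin
        (mem_of_superset (Icc_mem_nhdsGE_of_mem hs) hsub)))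
      (by
        have := hM x hxb
        have h6 : 0 < R - ‖x‖ - K * ρ a := by have := hd a ⟨le_rfl, ht.1⟩; linarith
        have : 0 ≤ N / 2 / (R - ‖x‖ - K * ρ a) := by positivity
        linarith)
      (by
        intro s hs
        have h6 : 0 < R - ‖x‖ - K * ρ s := by have := hd s hs; linarith
        have h7 := ((hρ s (hsub hs)).continuousWithinAt.mono hsub)
        exact (continuousWithinAt_const.add (continuousWithinAt_const.div
          (continuousWithinAt_const.sub (continuousWithinAt_const.mul h7)) h6.ne')))
      (by
        intro s hs
        have hs' : s ∈ Icc a t := ⟨hs.1, hs.2.le⟩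
        have h6 : 0 < R - ‖x‖ - K * ρ s := by have := hd s hs'; linarith
        have h7 := ((hρ s (hsub hs')).mono_of_mem_nhdsWithin
          (mem_of_superset (Icc_mem_nhdsGE_of_mem hs) hsub))
        have h8 := (((h7.const_mul K).const_sub (R - ‖x‖)).fun_inv h6.ne').const_mul (N/2)
        have h9 := h8.const_add M
        simp only [div_eq_mul_inv (N/2)]
        have e : k s * (N * (4 + R) / (R - ‖x‖ - K * ρ s) ^ 2) =
            N / 2 * (- -(K * k s) / (R - ‖x‖ - K * ρ s) ^ 2) := by rw [hK]; ring
        rw [e]; exact h9)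
      (by
        intro s hs
        have hs' : s ∈ Icc a t := ⟨hs.1, hs.2.le⟩
        exact (hu'b s (hsub hs') x hxb).trans
          (mul_le_mul_of_nonneg_left (hbound s hs') (hk s (hsub hs'))))
    have key2 := key (right_mem_Icc.2 ht.1)
    have h6 : 0 < R - ‖x‖ - K * ρ t := by linarith
    calc ‖u t x‖ * (R - ‖x‖ - K * ρ t) ≤ (M + N / 2 / (R - ‖x‖ - K * ρ t)) * (R - ‖x‖ - K * ρ t) :=
          mul_le_mul_of_nonneg_right key2 h6.le
      _ = M * (R - ‖x‖ - K * ρ t) + N / 2 := by field_simp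
      _ ≤ _ := by
        have := mul_nonneg hKpos.le (hρ0 t ht)
        have := norm_nonneg x
        have : M * (R - ‖x‖ - K * ρ t) ≤ M * R := mul_le_mul_of_nonneg_left (by linarith) hM0
        linarith
  have hNle : N ≤ M * R + N / 2 := by
    apply csSup_le hSne
    rintro y ⟨t, ht, x, hx, rfl⟩
    exact hstep t ht x hx
  intro t ht x hx
  have h1 : K * ρ t ≤ R / 4 :=
    (mul_le_mul_of_nonneg_left (hmono ht hbI ht.2) hKpos.le).trans hsmall
  have h2 := hle t ht x (by linarith)
  have h3 : ‖u t x‖ * (R / 2) ≤ ‖u t x‖ * (R - ‖x‖ - K * ρ t) :=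
    mul_le_mul_of_nonneg_left (by linarith) (norm_nonneg _)
  have h4 : ‖u t x‖ * (R / 2) ≤ (4 * M) * (R / 2) := by linarith
  exact le_of_mul_le_mul_right h4 (by linarith)

/-- time reversed version -/
lemma nagumo_rev (a b R M A : ℝ) (hab : a ≤ b) (hR : 0 < R) (u : ℝ → ℂ → ℂ) (k ρ : ℝ → ℝ)
    (hA : ∀ t ∈ Icc a b, ∀ x ∈ ball (0:ℂ) R, ‖u t x‖ ≤ A)
    (hhol : ∀ t ∈ Icc a b, DifferentiableOn ℂ (u t) (ball (0:ℂ) R))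
    (hder : ∀ t ∈ Icc a b, ∀ x ∈ ball (0:ℂ) R, ∃ u' : ℂ,
      HasDerivWithinAt (fun s => u s x) u' (Icc a b) t ∧
        ‖u'‖ ≤ k t * (‖u t x‖ + ‖deriv (u t) x‖))
    (hk : ∀ t ∈ Icc a b, 0 ≤ k t)
    (hρ : ∀ t ∈ Icc a b, HasDerivWithinAt ρ (k t) (Icc a b) t)
    (hmono : MonotoneOn ρ (Icc a b))
    (hsmall : 2 * (4 + R) * (ρ b - ρ a) ≤ R / 4)
    (hM : ∀ x ∈ ball (0:ℂ) R, ‖u b x‖ ≤ M) :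
    ∀ t ∈ Icc a b, ∀ x : ℂ, ‖x‖ ≤ R / 4 → ‖u t x‖ ≤ 4 * M := by
  have hI : ∀ t, t ∈ Icc (-b) (-a) → -t ∈ Icc a b := fun t ht =>
    ⟨by linarith [ht.2], by linarith [ht.1]⟩
  have hneg : ∀ t, HasDerivWithinAt (fun s : ℝ => -s) (-1) (Icc (-b) (-a)) t :=
    fun t => (hasDerivWithinAt_id t _).neg
  have := nagumo (-b) (-a) R M A (by linarith) hR (fun s => u (-s)) (fun s => k (-s))
    (fun s => ρ b - ρ (-s)) (fun t ht => hA _ (hI t ht)) (fun t ht => hhol _ (hI t ht))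
    (by
      intro t ht x hx
      obtain ⟨u', h1, h2⟩ := hder _ (hI t ht) x hx
      refine ⟨-u', ?_, by simpa using h2⟩
      have := HasDerivWithinAt.scomp (t' := Icc a b) t h1 (hneg t) hI
      simpa [Function.comp_def] using this)
    (fun t ht => hk _ (hI t ht))
    (by
      intro t ht
      have := HasDerivWithinAt.scomp (t' := Icc a b) t (hρ _ (hI t ht)) (hneg t) hI
      have := this.const_sub (ρ b)
      simpa [Function.comp_def] using this)
    (by
      intro s hs t ht hst
      have := hmono (hI t ht) (hI s hs) (by linarith)
      simp only; linarith)
    (by simp) (by simpa using hsmall) (by simpa using hM)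
  intro t ht x hx
  simpa using this (-t) ⟨by linarith [ht.2], by linarith [ht.1]⟩ x hx

lemma wphi_eq (m : ℝ → ℝ) {t : ℝ} (ht : 0 ≤ t) : wphi m t = ∫ τ in (0:ℝ)..t, m τ / τ := by
  rw [wphi, intervalIntegral.integral_of_le ht]

lemma wphi_deriv {T₀ : ℝ} {m : ℝ → ℝ} (hm : IsWeight T₀ m) {a b : ℝ} (ha : 0 < a) (hb : b ≤ T₀) :
    ∀ t ∈ Icc a b, HasDerivWithinAt (wphi m) (m t / t) (Icc a b) t := by
  intro t ht
  have ht0 : 0 < t := ha.trans_le ht.1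
  have hsub : Icc a b ⊆ Ioc 0 T₀ := fun s hs => ⟨ha.trans_le hs.1, hs.2.trans hb⟩
  have hc : ContinuousOn (fun τ => m τ / τ) (Icc a b) :=
    (hm.2.1.mono hsub).div continuousOn_id (fun s hs => (hsub hs).1.ne')
  have : Fact (t ∈ Icc a b) := ⟨ht⟩
  have hii : IntervalIntegrable (fun τ => m τ / τ) volume 0 t := by
    rw [intervalIntegrable_iff_integrableOn_Ioc_of_le ht0.le]
    exact hm.2.2.2.mono_set (Ioc_subset_Ioc_right (ht.2.trans hb))
  have := intervalIntegral.integral_hasDerivWithinAt_right (s := Icc a b) (t := Icc a b) hii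
    (hc.stronglyMeasurableAtFilter_nhdsWithin measurableSet_Icc t) (hc t ht)
  exact this.congr (fun s hs => wphi_eq m (hsub hs).1.le) (wphi_eq m ht0.le)

lemma wphi_mono {T₀ : ℝ} {m : ℝ → ℝ} (hm : IsWeight T₀ m) {a b : ℝ} (hb : b ≤ T₀) :
    MonotoneOn (wphi m) (Icc a b) := by
  intro s hs t ht hst
  apply setIntegral_mono_set (hm.2.2.2.mono_set (Ioc_subset_Ioc_right (ht.2.trans hb)))
  · refine (ae_restrict_iff' measurableSet_Ioc).2 (Eventually.of_forall fun τ hτ => ?_)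
    exact div_nonneg (hm.2.2.1 τ ⟨hτ.1, hτ.2.trans (ht.2.trans hb)⟩).le hτ.1.le
  · exact (Ioc_subset_Ioc_right hst).eventuallyLE

lemma wphi_nonneg {T₀ : ℝ} {m : ℝ → ℝ} (hm : IsWeight T₀ m) {t : ℝ} (hb : t ≤ T₀) :
    0 ≤ wphi m t :=
  setIntegral_nonneg measurableSet_Ioc fun τ hτ =>
    div_nonneg (hm.2.2.1 τ ⟨hτ.1, hτ.2.trans hb⟩).le hτ.1.le

lemma wphi_tendsto {T₀ : ℝ} (hT₀ : 0 < T₀) {m : ℝ → ℝ} (hm : IsWeight T₀ m) :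
    Tendsto (wphi m) (𝓝[>] 0) (𝓝 0) := by
  have hii : IntervalIntegrable (fun τ => m τ / τ) volume 0 T₀ := by
    rw [intervalIntegrable_iff_integrableOn_Ioc_of_le hT₀.le]
    exact hm.2.2.2
  have h := intervalIntegral.continuousOn_primitive_interval' hii left_mem_uIcc
  rw [uIcc_of_le hT₀.le] at h
  have h0 := h 0 ⟨le_rfl, hT₀.le⟩
  rw [ContinuousWithinAt, intervalIntegral.integral_same] at h0
  have h1 : 𝓝[>] (0:ℝ) ≤ 𝓝[Icc 0 T₀] 0 := by
    rw [← nhdsWithin_Ioc_eq_nhdsGT hT₀]; exact nhdsWithin_mono _ Ioc_subset_Icc_self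
  refine (h0.mono_left h1).congr' ?_
  filter_upwards [self_mem_nhdsWithin] with t ht
  exact (wphi_eq m (le_of_lt ht)).symm

lemma wphi_small {T₀ : ℝ} (hT₀ : 0 < T₀) {m : ℝ → ℝ} (hm : IsWeight T₀ m) {T η : ℝ}
    (hT : 0 < T) (hη : 0 < η) : ∃ T' > 0, T' ≤ T ∧ wphi m T' ≤ η := by
  have h1 := (wphi_tendsto hT₀ hm).eventually (ge_mem_nhds hη)
  have h2 : ∀ᶠ t in 𝓝[>] (0:ℝ), t ∈ Ioc 0 T := Ioc_mem_nhdsGT hT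
  obtain ⟨t, h3, h4⟩ := (h1.and h2).exists
  exact ⟨t, h4.1, h4.2, h3⟩

/-- the normalised function `t^{-λ(0,x)} v(t,x)` -/
def unorm (lam v : ℝ → ℂ → ℂ) (t : ℝ) (x : ℂ) : ℂ :=
  Complex.exp (-(lam 0 x) * (Real.log t : ℂ)) * v t x

lemma unorm_hol {lam v : ℝ → ℂ → ℂ} {t R : ℝ} (hl : DifferentiableOn ℂ (lam 0) (ball (0:ℂ) R))
    (hv : DifferentiableOn ℂ (v t) (ball (0:ℂ) R)) :
    DifferentiableOn ℂ (unorm lam v t) (ball (0:ℂ) R) :=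
  ((hl.neg.mul_const _).cexp).mul hv

lemma unorm_est (T₀ : ℝ) (hT₀e : T₀ < 1 / Real.exp 1)
    (m : ℝ → ℝ) (hm : IsWeight T₀ m) (lam b v : ℝ → ℂ → ℂ) (Λ₁ B L T R : ℝ)
    (hL : 0 ≤ L) (hB : 0 < B) (hT : T ≤ T₀)
    (hl : DifferentiableOn ℂ (lam 0) (ball (0:ℂ) R))
    (hLb : ∀ x ∈ ball (0:ℂ) R, ‖deriv (lam 0) x‖ ≤ L)
    (hc2 : ∀ t ∈ Set.Ioc (0:ℝ) T₀, ∀ x ∈ Metric.ball (0:ℂ) R,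
      ‖lam t x - lam 0 x‖ ≤ Λ₁ * m t)
    (hc3 : ∀ t ∈ Set.Ioc (0:ℝ) T₀, ∀ x ∈ Metric.ball (0:ℂ) R,
      ‖b t x‖ ≤ B * m t / |Real.log t|) (hΛ₁ : 0 < Λ₁)
    (hv : ∀ t ∈ Ioc 0 T, DifferentiableOn ℂ (v t) (ball (0:ℂ) R))
    (hvsol : SolvesLin (Set.Ioc 0 T) R lam b v) :
    ∀ t ∈ Ioc 0 T, ∀ x ∈ ball (0:ℂ) R, ∃ u' : ℂ,
      HasDerivWithinAt (fun s => unorm lam v s x) u' (Ioc 0 T) t ∧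
        ‖u'‖ ≤ ((Λ₁ + B * L + B) * (m t / t)) * (‖unorm lam v t x‖ + ‖deriv (unorm lam v t) x‖) := by
  intro t ht x hx
  have ht0 : 0 < t := ht.1
  have htT : t ∈ Ioc 0 T₀ := ⟨ht.1, ht.2.trans hT⟩
  have hm0 : 0 < m t := hm.2.2.1 t htT
  have hlog : 1 ≤ |Real.log t| := by
    have : Real.log t ≤ -1 := by
      rw [Real.log_le_iff_le_exp ht0, Real.exp_neg]
      have := htT.2
      rw [one_div] at hT₀e; linarith
    rw [abs_of_neg (by linarith)]; linarith
  have hlx : DifferentiableAt ℂ (lam 0) x := hl.differentiableAt (isOpen_ball.mem_nhds hx)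
  have hvx : DifferentiableAt ℂ (v t) x := (hv t ht).differentiableAt (isOpen_ball.mem_nhds hx)
  set E := Complex.exp (-(lam 0 x) * (Real.log t : ℂ)) with hE
  have hux : deriv (unorm lam v t) x =
      E * (-(deriv (lam 0) x) * (Real.log t : ℂ)) * v t x + E * deriv (v t) x :=
    (((hlx.hasDerivAt.neg.mul_const (Real.log t : ℂ)).cexp).mul hvx.hasDerivAt).deriv
  have htc : (t : ℂ) ≠ 0 := by exact_mod_cast ht0.ne'
  have hd1 : HasDerivWithinAt (fun s : ℝ => Complex.exp (-(lam 0 x) * (Real.log s : ℂ)))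
      (E * (-(lam 0 x) * ((t⁻¹ : ℝ) : ℂ))) (Ioc 0 T) t :=
    (((Real.hasDerivAt_log ht0.ne').ofReal_comp.const_mul (-(lam 0 x))).cexp).hasDerivWithinAt
  have hd := hd1.mul (hvsol t ht ht0 x hx)
  refine ⟨((lam t x - lam 0 x + b t x * (deriv (lam 0) x * (Real.log t : ℂ))) * unorm lam v t x +
    b t x * deriv (unorm lam v t) x) / t, ?_, ?_⟩
  · have hd' : HasDerivWithinAt (fun s => unorm lam v s x) _ (Ioc 0 T) t := hd
    refine hd'.congr_deriv ?_
    rw [hux, unorm, ← hE]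
    push_cast
    field_simp
    ring
  · have h1 := hc2 t htT x hx
    have h2 := hc3 t htT x hx
    have h3 : ‖b t x‖ * |Real.log t| ≤ B * m t := by
      rwa [le_div_iff₀ (by linarith)] at h2
    have h4 : ‖b t x‖ ≤ B * m t :=
      le_trans (le_mul_of_one_le_right (norm_nonneg _) hlog) h3
    have h5 : ‖b t x * (deriv (lam 0) x * (Real.log t : ℂ))‖ ≤ B * L * m t := by
      rw [norm_mul, norm_mul, Complex.norm_real, Real.norm_eq_abs]
      calc ‖b t x‖ * (‖deriv (lam 0) x‖ * |Real.log t|)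
          = (‖b t x‖ * |Real.log t|) * ‖deriv (lam 0) x‖ := by ring
        _ ≤ (B * m t) * L := mul_le_mul h3 (hLb x hx) (norm_nonneg _) (by positivity)
        _ = _ := by ring
    rw [norm_div, Complex.norm_real, Real.norm_eq_abs, abs_of_pos ht0, div_le_iff₀ ht0]
    set U := ‖unorm lam v t x‖ with hU
    set U' := ‖deriv (unorm lam v t) x‖ with hU'
    have hU0 : 0 ≤ U := norm_nonneg _
    have hU0' : 0 ≤ U' := norm_nonneg _
    have hp : 0 ≤ B * m t := by positivity
    have hq : 0 ≤ (Λ₁ + B * L) * m t := by positivity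
    calc _ ≤ (Λ₁ * m t + B * L * m t) * U + B * m t * U' := by
          refine (norm_add_le _ _).trans ?_
          rw [norm_mul, norm_mul]
          gcongr
          exact (norm_add_le _ _).trans (add_le_add h1 h5)
      _ ≤ (Λ₁ + B * L + B) * m t * (U + U') := by
          nlinarith [mul_nonneg hp hU0, mul_nonneg hq hU0']
      _ = _ := by field_simp

lemma unorm_bdd {lam v : ℝ → ℂ → ℂ} {T R r a b : ℝ} (ha : 0 < a) (hb : b ≤ T) (hr : r < R)
    (hl : DifferentiableOn ℂ (lam 0) (ball (0:ℂ) R))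
    (hv : ContinuousOn (fun p : ℝ × ℂ => v p.1 p.2) (Ioc 0 T ×ˢ ball (0:ℂ) R)) :
    ∃ A, ∀ t ∈ Icc a b, ∀ x ∈ closedBall (0:ℂ) r, ‖unorm lam v t x‖ ≤ A := by
  have hsub : Icc a b ×ˢ closedBall (0:ℂ) r ⊆ Ioc 0 T ×ˢ ball (0:ℂ) R :=
    prod_mono (fun s hs => ⟨ha.trans_le hs.1, hs.2.trans hb⟩) (closedBall_subset_ball hr)
  have h1 : ContinuousOn (fun p : ℝ × ℂ => lam 0 p.2) (Icc a b ×ˢ closedBall (0:ℂ) r) :=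
    hl.continuousOn.comp continuousOn_snd (fun p hp => (hsub hp).2)
  have h2 : ContinuousOn (fun p : ℝ × ℂ => (Real.log p.1 : ℂ)) (Icc a b ×ˢ closedBall (0:ℂ) r) :=
    Complex.continuous_ofReal.comp_continuousOn
      (continuousOn_fst.log (fun p hp => (hsub hp).1.1.ne'))
  have hc : ContinuousOn (fun p : ℝ × ℂ => unorm lam v p.1 p.2)
      (Icc a b ×ˢ closedBall (0:ℂ) r) :=
    ((h1.neg.mul h2).cexp).mul (hv.mono hsub)
  obtain ⟨A, hA⟩ := (isCompact_Icc.prod (isCompact_closedBall (0:ℂ) r)).exists_bound_of_continuousOn hc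
  exact ⟨A, fun t ht x hx => hA (t, x) ⟨ht, hx⟩⟩

/-- Lemma 6.2.1 (2): under `Re λ(0,0) > 0`, `|λ(t,x)-λ(0,x)| ≤ Λ m(t)` and
`|b| ≤ B m(t)/|log t|`, every solution `v ∈ X₁((0,T₁]×D_{R₁})` of
`t ∂v/∂t - λ v - b ∂v/∂x = 0` satisfies `v = V(ψ)` near the origin for some
holomorphic germ `ψ`; in particular `t^{-λ(0,x)} v(t,x)` converges uniformly near
`x = 0` to a holomorphic function as `t → 0⁺`. -/
theorem statement14
    (T₀ R₀ : ℝ) (hT₀ : 0 < T₀) (hT₀e : T₀ < 1 / Real.exp 1) (hR₀ : 0 < R₀)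
    (m : ℝ → ℝ) (hm : IsWeight T₀ m)
    (lam b : ℝ → ℂ → ℂ)
    (hlamX : MemX0 (Set.Icc 0 T₀) R₀ lam) (hbX : MemX0 (Set.Icc 0 T₀) R₀ b)
    (hre : 0 < (lam 0 0).re)
    (Λ₁ : ℝ) (hΛ₁ : 0 < Λ₁)
    (hc2 : ∀ t ∈ Set.Ioc (0:ℝ) T₀, ∀ x ∈ Metric.ball (0:ℂ) R₀,
      ‖lam t x - lam 0 x‖ ≤ Λ₁ * m t)
    (B : ℝ) (hB : 0 < B)
    (hc3 : ∀ t ∈ Set.Ioc (0:ℝ) T₀, ∀ x ∈ Metric.ball (0:ℂ) R₀,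
      ‖b t x‖ ≤ B * m t / |Real.log t|)
    (T₁ R₁ : ℝ) (hT₁ : 0 < T₁) (hT₁T₀ : T₁ ≤ T₀) (hR₁ : 0 < R₁) (hR₁R₀ : R₁ ≤ R₀)
    (v : ℝ → ℂ → ℂ) (hv : MemX1 (Set.Ioc 0 T₁) R₁ v)
    (hvsol : SolvesLin (Set.Ioc 0 T₁) R₁ lam b v) :
    ∃ δ > (0:ℝ), ∃ ψ : ℂ → ℂ,
      DifferentiableOn ℂ ψ (Metric.ball (0:ℂ) δ) ∧
      -- `t^{-λ(0,x)} v(t,x) → ψ(x)` uniformly on `D_δ` :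
      TendstoUniformlyOn
        (fun t x => Complex.exp (-(lam 0 x) * (Real.log t : ℂ)) * v t x) ψ
        (nhdsWithin 0 (Set.Ioi 0)) (Metric.ball (0:ℂ) δ) ∧
      -- hence `v = V(ψ)` near the origin : any solution with the same singular
      -- Cauchy data `ψ` coincides with `v` on some `(0,ε] × D_{δ'}` :
      (∀ T' R' : ℝ, 0 < T' → 0 < R' → ∀ w : ℝ → ℂ → ℂ,
        MemX1 (Set.Ioc 0 T') R' w → SolvesLin (Set.Ioc 0 T') R' lam b w →
        TendstoUniformlyOn
          (fun t x => Complex.exp (-(lam 0 x) * (Real.log t : ℂ)) * w t x) ψ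
          (nhdsWithin 0 (Set.Ioi 0)) (Metric.ball (0:ℂ) (min δ R')) →
        ∃ ε > (0:ℝ), ∃ δ' > (0:ℝ), ∀ t ∈ Set.Ioc (0:ℝ) ε, ∀ x ∈ Metric.ball (0:ℂ) δ',
          w t x = v t x) := by
  
  have hl0 : DifferentiableOn ℂ (lam 0) (ball (0:ℂ) R₀) := hlamX.2 0 ⟨le_rfl, hT₀.le⟩
  have hl1 := hl0.mono (ball_subset_ball hR₁R₀)
  set R := R₁ / 2 with hRdef
  have hR : 0 < R := by positivity
  have hRR₁ : R < R₁ := by linarith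
  have hRR₀ : R < R₀ := by linarith
  have hbR : ball (0:ℂ) R ⊆ ball (0:ℂ) R₁ := ball_subset_ball hRR₁.le
  obtain ⟨L, hLb⟩ := (isCompact_closedBall (0:ℂ) R).exists_bound_of_continuousOn
    ((hl0.deriv isOpen_ball).continuousOn.mono (closedBall_subset_ball hRR₀))
  have hL : 0 ≤ L := (norm_nonneg _).trans (hLb 0 (by simpa using hR.le))
  set C := Λ₁ + B * L + B with hC
  have hCpos : 0 < C := by positivity
  have hkpos : ∀ t ∈ Ioc (0:ℝ) T₀, 0 ≤ C * (m t / t) := fun t ht =>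
    mul_nonneg hCpos.le (div_nonneg (hm.2.2.1 t ht).le ht.1.le)
  obtain ⟨T, hT, hTT₁, hTs⟩ := wphi_small hT₀ hm hT₁
    (η := R / 4 / (2 * (4 + R) * C)) (by positivity)
  have hTT₀ : T ≤ T₀ := hTT₁.trans hT₁T₀
  rw [le_div_iff₀ (by positivity)] at hTs
  have hsubT : Ioc 0 T ⊆ Ioc 0 T₁ := Ioc_subset_Ioc_right hTT₁
  -- the estimate on the time derivative
  have hest := unorm_est T₀ hT₀e m hm lam b v Λ₁ B L T R hL hB hTT₀ (hl1.mono hbR)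
    (fun x hx => hLb x (ball_subset_closedBall hx))
    (fun t ht x hx => hc2 t ht x (ball_subset_ball hRR₀.le hx))
    (fun t ht x hx => hc3 t ht x (ball_subset_ball hRR₀.le hx)) hΛ₁
    (fun t ht => (hv.1.2 t (hsubT ht)).mono hbR)
    (fun t ht ht0 x hx => (hvsol t (hsubT ht) ht0 x (hbR hx)).mono hsubT)
  have hholU : ∀ t ∈ Ioc 0 T, DifferentiableOn ℂ (unorm lam v t) (ball (0:ℂ) R) :=
    fun t ht => unorm_hol (hl1.mono hbR) ((hv.1.2 t (hsubT ht)).mono hbR)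
  obtain ⟨M, hM⟩ := unorm_bdd (lam := lam) hT hTT₁ hRR₁ hl1 hv.1.1
  have hM0 : 0 ≤ M := (norm_nonneg _).trans (hM T ⟨le_rfl, le_rfl⟩ 0 (by simpa using hR.le))
  have hUb : ∀ t ∈ Ioc 0 T, ∀ x : ℂ, ‖x‖ ≤ R / 4 → ‖unorm lam v t x‖ ≤ 4 * M := by
    intro t ht
    obtain ⟨A, hA⟩ := unorm_bdd (lam := lam) ht.1 hTT₁ hRR₁ hl1 hv.1.1
    have hsub : Icc t T ⊆ Ioc 0 T := fun s hs => ⟨ht.1.trans_le hs.1, hs.2⟩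
    refine nagumo_rev t T R M A ht.2 hR (unorm lam v) (fun s => C * (m s / s))
      (fun s => C * wphi m s) (fun s hs x hx => hA s hs x (ball_subset_closedBall hx))
      (fun s hs => hholU s (hsub hs)) ?_ (fun s hs => hkpos s ⟨(hsub hs).1, hs.2.trans hTT₀⟩)
      (fun s hs => (wphi_deriv hm ht.1 hTT₀ s hs).const_mul C) ?_ ?_
      (fun x hx => hM T ⟨le_rfl, le_rfl⟩ x (ball_subset_closedBall hx)) t ⟨le_rfl, ht.2⟩
    · intro s hs x hx
      obtain ⟨u', h1, h2⟩ := hest s (hsub hs) x hx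
      exact ⟨u', h1.mono hsub, h2⟩
    · intro s hs s' hs' hss
      exact mul_le_mul_of_nonneg_left (wphi_mono hm hTT₀ hs hs' hss) hCpos.le
    · have h0 := wphi_nonneg hm (ht.2.trans hTT₀)
      have h1 : 0 ≤ 2 * (4 + R) * (C * wphi m t) := by positivity
      nlinarith
  have hδ : 0 < R / 8 := by positivity
  set A' := 4 * M + 4 * M / (R / 8) with hA'
  have hA'0 : 0 ≤ A' := by positivity
  have hdiff : ∀ t ∈ Ioc 0 T, ∀ s ∈ Ioc 0 T, s ≤ t → ∀ x ∈ ball (0:ℂ) (R / 8),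
      ‖unorm lam v t x - unorm lam v s x‖ ≤ A' * C * wphi m t := by
    intro t ht s hs hst x hx
    have hx8 : ‖x‖ < R / 8 := by simpa using hx
    have hxR : x ∈ ball (0:ℂ) R := by simp only [mem_ball, dist_zero_right]; linarith
    have hsub : Icc s t ⊆ Ioc 0 T := fun τ hτ => ⟨hs.1.trans_le hτ.1, hτ.2.trans ht.2⟩
    choose! u' hu' hu'b using hest
    have hdx : ∀ τ ∈ Icc s t, ‖unorm lam v τ x‖ + ‖deriv (unorm lam v τ) x‖ ≤ A' := by
      intro τ hτ
      have hmem : ∀ y : ℂ, dist y x ≤ R / 8 → ‖y‖ ≤ R / 4 := by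
        intro y hy
        have h3 := norm_le_norm_add_norm_sub' y x
        rw [dist_eq_norm] at hy; linarith
      refine add_le_add (hUb τ (hsub hτ) x (by linarith)) ?_
      apply Complex.norm_deriv_le_of_forall_mem_sphere_norm_le hδ
      · refine (hholU τ (hsub hτ)).diffContOnCl_ball ?_
        intro y hy
        have := hmem y hy
        simp only [mem_ball, dist_zero_right]; linarith
      · intro y hy
        exact hUb τ (hsub hτ) y (hmem y (le_of_eq hy))
    have hw := wphi_deriv hm hs.1 (ht.2.trans hTT₀)
    have key := image_norm_le_of_norm_deriv_right_le_deriv_boundary' (a := s) (b := t)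
      (f := fun τ => unorm lam v τ x - unorm lam v s x) (f' := fun τ => u' τ x)
      (B := fun τ => A' * C * (wphi m τ - wphi m s))
      (B' := fun τ => A' * C * (m τ / τ))
      (fun τ hτ => ((hu' τ (hsub hτ) x hxR).sub_const _).continuousWithinAt.mono hsub)
      (fun τ hτ => ((hu' τ (hsub ⟨hτ.1, hτ.2.le⟩) x hxR).sub_const _).mono_of_mem_nhdsWithin
        (mem_of_superset (Icc_mem_nhdsGE_of_mem hτ) hsub))
      (by simp)
      (fun τ hτ => (((hw τ hτ).sub_const _).const_mul _).continuousWithinAt)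
      (fun τ hτ => (((hw τ ⟨hτ.1, hτ.2.le⟩).sub_const _).const_mul _).mono_of_mem_nhdsWithin
        (Icc_mem_nhdsGE_of_mem hτ))
      (by
        intro τ hτ
        have hτ' : τ ∈ Icc s t := ⟨hτ.1, hτ.2.le⟩
        refine (hu'b τ (hsub hτ') x hxR).trans ?_
        have := mul_le_mul_of_nonneg_left (hdx τ hτ')
          (hkpos τ ⟨(hsub hτ').1, (hsub hτ').2.trans hTT₀⟩)
        refine this.trans (le_of_eq (by ring)))
    refine (key (right_mem_Icc.2 hst)).trans ?_
    have := wphi_nonneg hm (hs.2.trans hTT₀)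
    exact mul_le_mul_of_nonneg_left (by linarith) (by positivity)
  -- uniform Cauchy property
  have hUC : UniformCauchySeqOn (unorm lam v) (𝓝[>] 0) (ball (0:ℂ) (R / 8)) := by
    intro u hu
    obtain ⟨ε, hε, hεu⟩ := Metric.mem_uniformity_dist.1 hu
    have h1 : Tendsto (fun t => A' * C * wphi m t) (𝓝[>] 0) (𝓝 0) := by
      simpa using (wphi_tendsto hT₀ hm).const_mul (A' * C)
    have h2 : ∀ᶠ t in 𝓝[>] (0:ℝ), A' * C * wphi m t < ε ∧ t ∈ Ioc 0 T :=
      (h1.eventually (gt_mem_nhds hε)).and (Ioc_mem_nhdsGT hT)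
    filter_upwards [h2.prod_mk h2] with p hp x hx
    apply hεu
    rcases le_total p.1 p.2 with h | h
    · rw [dist_comm, dist_eq_norm]
      exact (hdiff _ hp.2.2 _ hp.1.2 h x hx).trans_lt hp.2.1
    · rw [dist_eq_norm]
      exact (hdiff _ hp.1.2 _ hp.2.2 h x hx).trans_lt hp.1.1
  have hlim : ∀ x ∈ ball (0:ℂ) (R / 8), ∃ y, Tendsto (fun t => unorm lam v t x) (𝓝[>] 0) (𝓝 y) :=
    fun x hx => CompleteSpace.complete (hUC.cauchy_map hx)
  choose! ψ hψ using hlim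
  have hTU : TendstoUniformlyOn (unorm lam v) ψ (𝓝[>] 0) (ball (0:ℂ) (R / 8)) :=
    hUC.tendstoUniformlyOn_of_tendsto hψ
  have hb8 : ball (0:ℂ) (R / 8) ⊆ ball (0:ℂ) R := ball_subset_ball (by linarith)
  refine ⟨R / 8, hδ, ψ, ?_, hTU, ?_⟩
  · refine hTU.tendstoLocallyUniformlyOn.differentiableOn ?_ isOpen_ball
    filter_upwards [Ioc_mem_nhdsGT hT] with t ht
    exact (hholU t ht).mono hb8
  intro T' R' hT' hR' w hw hwsol hwlim
  have hwlim' : TendstoUniformlyOn (unorm lam w) ψ (𝓝[>] 0) (ball (0:ℂ) (min (R / 8) R')) := hwlim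
  set r := min (R / 8) R' with hr
  have hr0 : 0 < r := lt_min hδ hR'
  have hr8 : r ≤ R / 8 := min_le_left _ _
  have hrR' : r ≤ R' := min_le_right _ _
  set R₂ := r / 2 with hR₂
  have hR₂0 : 0 < R₂ := by positivity
  have hR₂r : R₂ < r := by linarith
  obtain ⟨T₃, hT₃, hT₃T, hT₃s⟩ := wphi_small hT₀ hm (lt_min hT hT')
    (η := R₂ / 4 / (2 * (4 + R₂) * C)) (by positivity)
  rw [le_div_iff₀ (by positivity)] at hT₃s
  have hT₃T₀ : T₃ ≤ T₀ := (hT₃T.trans (min_le_left _ _)).trans hTT₀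
  have hs1 : Ioc 0 T₃ ⊆ Ioc 0 T₁ :=
    Ioc_subset_Ioc_right ((hT₃T.trans (min_le_left _ _)).trans hTT₁)
  have hs2 : Ioc 0 T₃ ⊆ Ioc 0 T' := Ioc_subset_Ioc_right (hT₃T.trans (min_le_right _ _))
  have hbr1 : ball (0:ℂ) r ⊆ ball (0:ℂ) R₁ := ball_subset_ball (by linarith)
  have hbr2 : ball (0:ℂ) r ⊆ ball (0:ℂ) R' := ball_subset_ball hrR'
  have hb2 : ball (0:ℂ) R₂ ⊆ ball (0:ℂ) r := ball_subset_ball hR₂r.le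
  have hb2R : ball (0:ℂ) R₂ ⊆ closedBall (0:ℂ) R :=
    (ball_subset_ball (by linarith)).trans ball_subset_closedBall
  have hb20 : ball (0:ℂ) R₂ ⊆ ball (0:ℂ) R₀ := ball_subset_ball (by linarith)
  set z : ℝ → ℂ → ℂ := fun t x => v t x - w t x with hz
  have hzc : ContinuousOn (fun p : ℝ × ℂ => z p.1 p.2) (Ioc 0 T₃ ×ˢ ball (0:ℂ) r) :=
    (hv.1.1.mono (prod_mono hs1 hbr1)).sub (hw.1.1.mono (prod_mono hs2 hbr2))
  have hzh : ∀ t ∈ Ioc 0 T₃, DifferentiableOn ℂ (z t) (ball (0:ℂ) r) := fun t ht =>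
    ((hv.1.2 t (hs1 ht)).mono hbr1).sub ((hw.1.2 t (hs2 ht)).mono hbr2)
  have hzs : SolvesLin (Ioc 0 T₃) R₂ lam b z := by
    intro t ht ht0 x hx
    have hxr := hb2 hx
    have h1 := (hvsol t (hs1 ht) ht0 x (hbr1 hxr)).mono hs1
    have h2 := (hwsol t (hs2 ht) ht0 x (hbr2 hxr)).mono hs2
    have h3 : deriv (z t) x = deriv (v t) x - deriv (w t) x :=
      deriv_fun_sub ((hv.1.2 t (hs1 ht)).differentiableAt (isOpen_ball.mem_nhds (hbr1 hxr)))
        ((hw.1.2 t (hs2 ht)).differentiableAt (isOpen_ball.mem_nhds (hbr2 hxr)))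
    have h4 : HasDerivWithinAt (fun s => z s x) _ (Ioc 0 T₃) t := h1.sub h2
    refine h4.congr_deriv ?_
    rw [h3, hz]; ring
  have hestz := unorm_est T₀ hT₀e m hm lam b z Λ₁ B L T₃ R₂ hL hB hT₃T₀ (hl0.mono hb20)
    (fun x hx => hLb x (hb2R hx))
    (fun t ht x hx => hc2 t ht x (hb20 hx))
    (fun t ht x hx => hc3 t ht x (hb20 hx)) hΛ₁
    (fun t ht => (hzh t ht).mono hb2) hzs
  have hzU : ∀ t x, unorm lam z t x = unorm lam v t x - unorm lam w t x := by
    intro t x; simp only [unorm, hz]; ring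
  refine ⟨T₃, hT₃, R₂ / 4, by positivity, ?_⟩
  intro t ht x hx
  have hx4 : ‖x‖ < R₂ / 4 := by simpa using hx
  have hzero : ‖unorm lam z t x‖ ≤ 0 := by
    refine le_of_forall_pos_le_add fun ε hε => ?_
    have e1 := Metric.tendstoUniformlyOn_iff.1 (hTU.mono (ball_subset_ball hr8)) (ε / 8) (by positivity)
    have e2 := Metric.tendstoUniformlyOn_iff.1 hwlim' (ε / 8) (by positivity)
    have e3 : ∀ᶠ s in 𝓝[>] (0:ℝ), s ∈ Ioc 0 t := Ioc_mem_nhdsGT ht.1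
    obtain ⟨s, ⟨h1, h2⟩, h3⟩ := ((e1.and e2).and e3).exists
    obtain ⟨A, hA⟩ := unorm_bdd (lam := lam) h3.1 ht.2 hR₂r
      (hl0.mono (ball_subset_ball (by linarith))) hzc
    have hsub : Icc s t ⊆ Ioc 0 T₃ := fun τ hτ => ⟨h3.1.trans_le hτ.1, hτ.2.trans ht.2⟩
    have hfin := nagumo s t R₂ (ε / 4) A h3.2 hR₂0 (unorm lam z) (fun s => C * (m s / s))
      (fun τ => C * wphi m τ - C * wphi m s)
      (fun τ hτ x hx => hA τ hτ x (ball_subset_closedBall hx))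
      (fun τ hτ => unorm_hol (hl0.mono hb20) ((hzh τ (hsub hτ)).mono hb2))
      (fun τ hτ x hx => by
        obtain ⟨u', h1, h2⟩ := hestz τ (hsub hτ) x hx
        exact ⟨u', h1.mono hsub, h2⟩)
      (fun τ hτ => hkpos τ ⟨(hsub hτ).1, (hsub hτ).2.trans hT₃T₀⟩)
      (fun τ hτ => ((wphi_deriv hm h3.1 (ht.2.trans hT₃T₀) τ hτ).const_mul C).sub_const _)
      (fun τ hτ τ' hτ' hh => sub_le_sub_right
        (mul_le_mul_of_nonneg_left (wphi_mono hm (ht.2.trans hT₃T₀) hτ hτ' hh) hCpos.le) _)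
      (by simp)
      (by
        have h0 := wphi_nonneg hm ((h3.2.trans ht.2).trans hT₃T₀)
        have h4 := wphi_mono (a := t) hm hT₃T₀ ⟨le_rfl, ht.2⟩ ⟨ht.2, le_rfl⟩ ht.2
        have h5 : C * wphi m t - C * wphi m s ≤ C * wphi m T₃ := by
          have := mul_nonneg hCpos.le h0
          have := mul_le_mul_of_nonneg_left h4 hCpos.le
          linarith
        have h6 := mul_le_mul_of_nonneg_left h5 (by positivity : 0 ≤ 2 * (4 + R₂))
        linarith)
      (fun y hy => by
        have a1 := h1 y (hb2 hy)
        have a2 := h2 y (hb2 hy)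
        rw [hzU, ← dist_eq_norm]
        have := dist_triangle_left (unorm lam v s y) (unorm lam w s y) (ψ y)
        linarith)
      t ⟨h3.2, le_rfl⟩ x hx4.le
    linarith
  have hz0 : unorm lam z t x = 0 := norm_le_zero_iff.1 hzero
  have hz1 : z t x = 0 := (mul_eq_zero.1 hz0).resolve_left (Complex.exp_ne_zero _)
  exact (sub_eq_zero.1 hz1).symm
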